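/- Let C = {(x, y) ∈ ℝ² : y ≥ |x|} and define α : ℝ² → ℝ ∪ {−∞} by α(x, y) = y − x if x ≥ 0 and y ≥ |x|; α(x, y) = √(y² − x²) if x < 0 and y ≥ |x|; α(x, y) = −∞ if y < |x|. Then α is a continuous antinorm associated with C, and for the linear functional p(x, y) = x − y one has: p lies in the relative boundary rb(C^∨) of the negative dual cone, p is not identically zero on C, p^∨ = {(x, y) : 0 ≤ x ≤ y}, and ri(p^∨) ⊆ ri C. In particular, α is linear on a subcone adjacent to the boundary of C. -/

import Mathlib

open Set

variable {V : Type*} [NormedAddCommGroup V] [NormedSpace ℝ V]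

/-- `C` is a closed convex cone (containing the origin). -/
def IsClosedConvexCone (C : Set V) : Prop :=
  (0 : V) ∈ C ∧ IsClosed C ∧ Convex ℝ C ∧ ∀ c : ℝ, 0 < c → ∀ x ∈ C, c • x ∈ C

/-- A cone is salient if it contains no nonzero linear subspace,
equivalently it contains no pair `x, -x` with `x ≠ 0`. -/
def IsSalientCone (C : Set V) : Prop := ∀ x ∈ C, x ≠ 0 → -x ∉ C

/-- The relative boundary of a set: the set minus its relative (intrinsic) interior. -/
def relBoundary (C : Set V) : Set V := C \ intrinsicInterior ℝ C

/-- `a` is an antinorm associated with the cone `C` : it takes values in `ℝ ∪ {-∞}`,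
is positive on the relative interior of `C`, vanishes on the relative boundary of `C`,
is `-∞` off `C`, is positively homogeneous and superadditive (concave). -/
def IsAntinorm (C : Set V) (a : V → EReal) : Prop :=
  (∀ v, a v ≠ ⊤) ∧
  (∀ v ∈ intrinsicInterior ℝ C, 0 < a v) ∧
  (∀ v ∈ relBoundary C, a v = 0) ∧
  (∀ v, v ∉ C → a v = ⊥) ∧
  (∀ c : ℝ, 0 < c → ∀ v, a (c • v) = (c : EReal) * a v) ∧
  (∀ v w, a v + a w ≤ a (v + w))

/-- The negative dual cone `C^∨ = {p : ⟨p,u⟩ ≤ 0 ∀ u ∈ C}`. -/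
def negDual (C : Set V) : Set (V →L[ℝ] ℝ) := {p | ∀ u ∈ C, p u ≤ 0}

/-- The antisphere of radius `r`. -/
def antisphere (a : V → EReal) (r : ℝ) : Set V := {v | a v = (r : EReal)}

/-- The dual function `α^∨(p) = -sup_{v ∈ S₁} ⟨p, v⟩`. -/
noncomputable def dualFn (a : V → EReal) (p : V →L[ℝ] ℝ) : EReal :=
  - sSup ((fun v => ((p v : ℝ) : EReal)) '' antisphere a 1)

/-- `p^∨_r` : the set of maximizers of `v ↦ ⟨p, v⟩` over the antisphere `S_r`. -/
def maxSet (a : V → EReal) (p : V →L[ℝ] ℝ) (r : ℝ) : Set V :=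
  {v ∈ antisphere a r | ∀ w ∈ antisphere a r, p w ≤ p v}

/-- `p^∨ = ⋃_{r ≥ 0} p^∨_r`. -/
def pDual (a : V → EReal) (p : V →L[ℝ] ℝ) : Set V := ⋃ r ∈ Ici (0 : ℝ), maxSet a p r

/-- The antinorm of Example 1: on the cone `C = {(x,y) : y ≥ |x|}` it equals `y - x`
for `x ≥ 0` and `√(y² - x²)` for `x < 0`, and `-∞` off `C`. -/
noncomputable def exAntinorm (v : ℝ × ℝ) : EReal :=
  if 0 ≤ v.1 ∧ |v.1| ≤ v.2 then ((v.2 - v.1 : ℝ) : EReal)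
  else if |v.1| ≤ v.2 then ((Real.sqrt (v.2 ^ 2 - v.1 ^ 2) : ℝ) : EReal)
  else ⊥

/-- The linear functional `p(x, y) = x - y` on `ℝ × ℝ`. -/
noncomputable def exFunctional : (ℝ × ℝ) →L[ℝ] ℝ :=
  ContinuousLinearMap.fst ℝ ℝ ℝ - ContinuousLinearMap.snd ℝ ℝ ℝ

/-! Both pieces of `α` are the smaller of two functions: `α = min(√(y² - x²), -p)`. The first is the
Lorentz antinorm of the cone, superadditive by Cauchy–Schwarz, and a minimum of an antinorm with a
linear form that is positive on `ri C` is again an antinorm. Since `α ≤ -p`, with equality at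
`(0, r)` on every antisphere `S_r`, the maximizers of `p` on antispheres are exactly the points of
`C` where `α = -p`. Finally `p` is a boundary point of `C^∨` because it vanishes at `(1, 1) ∈ C`,
whereas interior points of `C^∨` are negative on `C \ {0}`.
-/

lemma intrinsicInterior_eq_interior_of_affineSpan_eq_top {𝕜 W P : Type*} [Ring 𝕜]
    [AddCommGroup W] [Module 𝕜 W] [TopologicalSpace P] [AddTorsor W P] {s : Set P}
    (hs : affineSpan 𝕜 s = ⊤) : intrinsicInterior 𝕜 s = interior s := by
  have hopen : IsOpen (affineSpan 𝕜 s : Set P) := by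
    rw [hs]
    exact isOpen_univ
  refine (interior_maximal intrinsicInterior_subset ?_).antisymm interior_subset_intrinsicInterior
  exact hopen.isOpenMap_subtype_val _ isOpen_interior

lemma intrinsicInterior_eq_interior {s : Set V} (hs : (interior s).Nonempty) :
    intrinsicInterior ℝ s = interior s := by
  apply intrinsicInterior_eq_interior_of_affineSpan_eq_top
  exact top_unique (isOpen_interior.affineSpan_eq_top hs ▸ affineSpan_mono ℝ interior_subset)

lemma intrinsicInterior_subset_of_subset {s t : Set V} (hs : (interior s).Nonempty) (hst : s ⊆ t) :
    intrinsicInterior ℝ s ⊆ intrinsicInterior ℝ t := by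
  rw [intrinsicInterior_eq_interior hs]
  exact (interior_mono hst).trans interior_subset_intrinsicInterior

section Antinorm

variable {C : Set V} {a : V → EReal}

lemma isAntinorm_of_eq_coe (K : ConvexCone ℝ V) {f : V → ℝ}
    (ha : ∀ v ∈ K, a v = f v) (ha' : ∀ v ∉ K, a v = ⊥)
    (hpos : ∀ v ∈ intrinsicInterior ℝ (K : Set V), 0 < f v)
    (hzero : ∀ v ∈ relBoundary (K : Set V), f v = 0)
    (hsmul : ∀ c : ℝ, 0 < c → ∀ v ∈ K, f (c • v) = c * f v)
    (hadd : ∀ v ∈ K, ∀ w ∈ K, f v + f w ≤ f (v + w)) : IsAntinorm (K : Set V) a := by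
  refine ⟨fun v ↦ ?_, fun v hv ↦ ?_, fun v hv ↦ ?_, ha', fun c hc v ↦ ?_, fun v w ↦ ?_⟩
  · by_cases hv : v ∈ K
    · exact ha v hv ▸ EReal.coe_ne_top _
    · exact ha' v hv ▸ bot_ne_top
  · rw [ha v (intrinsicInterior_subset hv)]
    exact EReal.coe_pos.2 (hpos v hv)
  · rw [ha v hv.1, hzero v hv, EReal.coe_zero]
  · by_cases hv : v ∈ K
    · rw [ha _ (K.smul_mem hc hv), ha v hv, hsmul c hc v hv, EReal.coe_mul]
    · rw [ha' _ (mt (K.smul_mem_iff hc).1 hv), ha' v hv, EReal.coe_mul_bot_of_pos hc]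
  · by_cases hv : v ∈ K
    · by_cases hw : w ∈ K
      · rw [ha v hv, ha w hw, ha _ (K.add_mem hv hw), ← EReal.coe_add]
        exact EReal.coe_le_coe_iff.2 (hadd v hv w hw)
      · rw [ha' w hw, EReal.add_bot]
        exact bot_le
    · rw [ha' v hv, EReal.bot_add]
      exact bot_le

lemma IsAntinorm.min_linear (ha : IsAntinorm C a) (l : V →ₗ[ℝ] ℝ)
    (hpos : ∀ v ∈ intrinsicInterior ℝ C, 0 < l v) (hnonneg : ∀ v ∈ relBoundary C, 0 ≤ l v) :
    IsAntinorm C fun v ↦ min (a v) (l v) := by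
  obtain ⟨-, ha_pos, ha_zero, ha_bot, ha_smul, ha_add⟩ := ha
  refine ⟨fun v ↦ ?_, fun v hv ↦ ?_, fun v hv ↦ ?_, fun v hv ↦ ?_, fun c hc v ↦ ?_, fun v w ↦ ?_⟩
  · exact ((min_le_right _ _).trans_lt (EReal.coe_lt_top _)).ne
  · exact lt_min (ha_pos v hv) (EReal.coe_pos.2 (hpos v hv))
  · simpa only [ha_zero v hv, min_eq_left_iff] using EReal.coe_nonneg.2 (hnonneg v hv)
  · simp only [ha_bot v hv, min_eq_left_iff, bot_le]
  · have hmono : Monotone fun x : EReal ↦ (c : EReal) * x := fun _ _ h ↦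
      mul_le_mul_of_nonneg_left h (EReal.coe_nonneg.2 hc.le)
    simp only [ha_smul c hc, map_smul, smul_eq_mul, EReal.coe_mul]
    exact hmono.map_min.symm
  · refine le_min ((add_le_add (min_le_left _ _) (min_le_left _ _)).trans (ha_add v w)) ?_
    rw [map_add, EReal.coe_add]
    exact add_le_add (min_le_right _ _) (min_le_right _ _)

lemma pDual_eq_setOf_eq_neg {p : V →L[ℝ] ℝ} (hle : ∀ v, a v ≤ ((-p v : ℝ) : EReal))
    (hattained : ∀ r : ℝ, 0 ≤ r → ∃ v ∈ antisphere a r, p v = -r) :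
    pDual a p = {v | p v ≤ 0 ∧ a v = ((-p v : ℝ) : EReal)} := by
  have hbound {v : V} {r : ℝ} (hv : v ∈ antisphere a r) : p v ≤ -r :=
    le_neg.2 (EReal.coe_le_coe_iff.1 (hv.symm.trans_le (hle v)))
  ext v
  simp only [pDual, maxSet, mem_iUnion, mem_Ici, mem_ofPred_eq, exists_prop]
  constructor
  · rintro ⟨r, hr, hv, hmax⟩
    obtain ⟨w, hw, hpw⟩ := hattained r hr
    have hpv : p v = -r := (hbound hv).antisymm (hpw ▸ hmax w hw)
    exact ⟨by linarith, by rw [hpv, neg_neg]; exact hv⟩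
  · rintro ⟨hpv, hv⟩
    exact ⟨-p v, neg_nonneg.2 hpv, hv, fun w hw ↦ by linarith [hbound hw]⟩

end Antinorm

section NegDual

variable {C : Set V} {p : V →L[ℝ] ℝ} {u : V}

lemma apply_neg_of_mem_interior_negDual (hp : p ∈ interior (negDual C)) (hu : u ∈ C)
    (hu0 : u ≠ 0) : p u < 0 := by
  let eval : (V →L[ℝ] ℝ) →L[ℝ] ℝ := ContinuousLinearMap.apply ℝ ℝ u
  have heval : eval ≠ 0 := by
    obtain ⟨f, hf⟩ := SeparatingDual.exists_ne_zero (R := ℝ) hu0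
    exact fun h ↦ hf (DFunLike.congr_fun h f)
  have himage : eval '' negDual C ⊆ Iic 0 := image_subset_iff.2 fun q hq ↦ hq u hu
  have hmem : eval p ∈ interior (Iic 0) := interior_mono himage
    ((eval.isOpenMap_of_ne_zero heval).image_interior_subset _ (mem_image_of_mem eval hp))
  rwa [interior_Iic] at hmem

lemma mem_relBoundary_negDual (hC : (interior (negDual C)).Nonempty) (hp : p ∈ negDual C)
    (hu : u ∈ C) (hu0 : u ≠ 0) (hpu : p u = 0) : p ∈ relBoundary (negDual C) := by
  refine ⟨hp, fun hri ↦ ?_⟩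
  rw [intrinsicInterior_eq_interior hC] at hri
  exact (apply_neg_of_mem_interior_negDual hri hu hu0).ne hpu

end NegDual

section NormCone

variable (E : Type*) [NormedAddCommGroup E] [NormedSpace ℝ E]

/-- The norm cone `{(x, t) : ‖x‖ ≤ t}` in `E × ℝ`; for `E = ℝ` it is the cone of the example. -/
def normCone : ConvexCone ℝ (E × ℝ) where
  carrier := {v | ‖v.1‖ ≤ v.2}
  smul_mem' c hc v hv := by
    simpa only [mem_ofPred_eq, Prod.smul_fst, Prod.smul_snd, norm_smul, Real.norm_of_nonneg hc.le,
      smul_eq_mul] using mul_le_mul_of_nonneg_left hv hc.le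
  add_mem' _ hv _ hw := (norm_add_le _ _).trans (add_le_add hv hw)

lemma interior_normCone : interior (normCone E : Set (E × ℝ)) = {v | ‖v.1‖ < v.2} := by
  have hopen : IsOpen {v : E × ℝ | ‖v.1‖ < v.2} := isOpen_lt (by fun_prop) (by fun_prop)
  have hsub : {v : E × ℝ | ‖v.1‖ < v.2} ⊆ normCone E :=
    fun v hv ↦ le_of_lt (show ‖v.1‖ < v.2 from hv)
  refine Subset.antisymm (fun v hv ↦ ?_) (interior_maximal hsub hopen)
  have hslice : v.2 ∈ interior ((fun t ↦ (v.1, t)) ⁻¹' (normCone E : Set (E × ℝ))) :=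
    preimage_interior_subset_interior_preimage (by fun_prop) hv
  change v.2 ∈ interior (Ici ‖v.1‖) at hslice
  rwa [interior_Ici] at hslice

lemma intrinsicInterior_normCone :
    intrinsicInterior ℝ (normCone E : Set (E × ℝ)) = {v | ‖v.1‖ < v.2} := by
  rw [intrinsicInterior_eq_interior, interior_normCone]
  rw [interior_normCone]
  exact ⟨(0, 1), by simp⟩

lemma relBoundary_normCone : relBoundary (normCone E : Set (E × ℝ)) = {v | ‖v.1‖ = v.2} := by
  ext v
  rw [relBoundary, intrinsicInterior_normCone]
  exact ⟨fun h ↦ le_antisymm h.1 (not_lt.1 h.2), fun h ↦ ⟨le_of_eq h, not_lt.2 (ge_of_eq h)⟩⟩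

lemma interior_negDual_normCone_nonempty :
    (interior (negDual (normCone E : Set (E × ℝ)))).Nonempty := by
  -- On the cone `‖(x, t)‖ = t`, so adding to `-t` a form of norm below `1` keeps it nonpositive.
  let height := ContinuousLinearMap.snd ℝ E ℝ
  have hball : Metric.ball (-height) 1 ⊆ negDual (normCone E : Set (E × ℝ)) := by
    intro q hq u hu
    have hq : ‖q + height‖ ≤ 1 := by simpa [dist_eq_norm] using (Metric.mem_ball.1 hq).le
    have hu : ‖u.1‖ ≤ u.2 := hu
    have hnorm : ‖u‖ = u.2 := by
      rw [Prod.norm_def, Real.norm_of_nonneg ((norm_nonneg _).trans hu), max_eq_right hu]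
    have happly : q u + u.2 ≤ u.2 := calc
      q u + u.2 = (q + height) u := rfl
      _ ≤ ‖(q + height) u‖ := Real.le_norm_self _
      _ ≤ 1 * ‖u‖ := (q + height).le_of_opNorm_le hq u
      _ = u.2 := by rw [one_mul, hnorm]
    linarith
  exact ⟨-height, interior_maximal hball Metric.isOpen_ball (Metric.mem_ball_self one_pos)⟩

end NormCone

section Lorentz

lemma sqrt_mul_add_sqrt_mul_le_sqrt {a b c d : ℝ} (ha : 0 ≤ a) (hb : 0 ≤ b) (hc : 0 ≤ c)
    (hd : 0 ≤ d) : √(a * b) + √(c * d) ≤ √((a + c) * (b + d)) := by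
  have hcs := Real.sum_sqrt_mul_sqrt_le (f := ![a, c]) (g := ![b, d]) Finset.univ
    (by simp [Fin.forall_fin_two, ha, hc]) (by simp [Fin.forall_fin_two, hb, hd])
  simpa [Fin.sum_univ_two, Real.sqrt_mul, ha, hc, add_nonneg] using hcs

lemma sqrt_sq_sub_norm_sq_add_le {E : Type*} [SeminormedAddGroup E] {x y : E} {s t : ℝ}
    (hx : ‖x‖ ≤ s) (hy : ‖y‖ ≤ t) :
    √(s ^ 2 - ‖x‖ ^ 2) + √(t ^ 2 - ‖y‖ ^ 2) ≤ √((s + t) ^ 2 - ‖x + y‖ ^ 2) := by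
  have hx0 := norm_nonneg x
  have hy0 := norm_nonneg y
  calc √(s ^ 2 - ‖x‖ ^ 2) + √(t ^ 2 - ‖y‖ ^ 2)
      = √((s + ‖x‖) * (s - ‖x‖)) + √((t + ‖y‖) * (t - ‖y‖)) := by
        rw [sq_sub_sq, sq_sub_sq]
    _ ≤ √((s + ‖x‖ + (t + ‖y‖)) * (s - ‖x‖ + (t - ‖y‖))) := by
        apply sqrt_mul_add_sqrt_mul_le_sqrt <;> linarith
    _ = √((s + t) ^ 2 - (‖x‖ + ‖y‖) ^ 2) := by ring_nf
    _ ≤ √((s + t) ^ 2 - ‖x + y‖ ^ 2) := by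
        gcongr
        exact norm_add_le x y

variable {E : Type*} [NormedAddCommGroup E] [NormedSpace ℝ E]

open Classical in
/-- The Lorentz antinorm `√(t² - ‖x‖²)` on the norm cone of `E`, with value `-∞` off it. The
antinorm of the example is its minimum with a linear form. -/
noncomputable def lorentzAntinorm (v : E × ℝ) : EReal :=
  if v ∈ normCone E then ((√(v.2 ^ 2 - ‖v.1‖ ^ 2) : ℝ) : EReal) else ⊥

lemma lorentzAntinorm_of_mem {v : E × ℝ} (hv : v ∈ normCone E) :
    lorentzAntinorm v = ((√(v.2 ^ 2 - ‖v.1‖ ^ 2) : ℝ) : EReal) :=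
  if_pos hv

lemma lorentzAntinorm_of_notMem {v : E × ℝ} (hv : v ∉ normCone E) : lorentzAntinorm v = ⊥ :=
  if_neg hv

lemma isAntinorm_lorentzAntinorm :
    IsAntinorm (normCone E : Set (E × ℝ)) lorentzAntinorm := by
  refine isAntinorm_of_eq_coe (normCone E) (f := fun v ↦ √(v.2 ^ 2 - ‖v.1‖ ^ 2))
    (fun _ ↦ lorentzAntinorm_of_mem) (fun _ ↦ lorentzAntinorm_of_notMem)
    (fun v hv ↦ ?_) (fun v hv ↦ ?_) (fun c hc v _ ↦ ?_)
    (fun v hv w hw ↦ sqrt_sq_sub_norm_sq_add_le hv hw)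
  · rw [intrinsicInterior_normCone] at hv
    exact Real.sqrt_pos.2 (sub_pos.2 (pow_lt_pow_left₀ hv (norm_nonneg _) two_ne_zero))
  · rw [relBoundary_normCone] at hv
    rw [← hv.out, sub_self, Real.sqrt_zero]
  · rw [Prod.smul_fst, Prod.smul_snd, norm_smul, Real.norm_of_nonneg hc.le, smul_eq_mul,
      mul_pow, mul_pow, ← mul_sub, Real.sqrt_mul (sq_nonneg c), Real.sqrt_sq hc.le]

lemma continuousOn_lorentzAntinorm :
    ContinuousOn lorentzAntinorm (normCone E : Set (E × ℝ)) := by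
  have hcont : Continuous fun v : E × ℝ ↦ ((√(v.2 ^ 2 - ‖v.1‖ ^ 2) : ℝ) : EReal) :=
    continuous_coe_real_ereal.comp (by fun_prop)
  exact hcont.continuousOn.congr fun _ ↦ lorentzAntinorm_of_mem

end Lorentz

lemma coe_normCone_real : (normCone ℝ : Set (ℝ × ℝ)) = {v : ℝ × ℝ | |v.1| ≤ v.2} := rfl

lemma exFunctional_apply (v : ℝ × ℝ) : exFunctional v = v.1 - v.2 := rfl

lemma exAntinorm_of_fst_nonneg {v : ℝ × ℝ} (h0 : 0 ≤ v.1) (hv : v.1 ≤ v.2) :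
    exAntinorm v = ((-exFunctional v : ℝ) : EReal) := by
  rw [exFunctional_apply, neg_sub]
  exact if_pos ⟨h0, (abs_of_nonneg h0).trans_le hv⟩

lemma exAntinorm_of_notMem {v : ℝ × ℝ} (hv : v ∉ normCone ℝ) : exAntinorm v = ⊥ :=
  (if_neg fun h ↦ hv h.2).trans (if_neg hv)

lemma exAntinorm_of_fst_neg {v : ℝ × ℝ} (h0 : v.1 < 0) : exAntinorm v = lorentzAntinorm v := by
  by_cases hv : |v.1| ≤ v.2
  · rw [lorentzAntinorm_of_mem hv, exAntinorm, if_neg fun h ↦ h0.not_ge h.1, if_pos hv,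
      Real.norm_eq_abs, sq_abs]
  · rw [lorentzAntinorm_of_notMem hv, exAntinorm_of_notMem hv]

lemma exAntinorm_eq_min (v : ℝ × ℝ) :
    exAntinorm v = min (lorentzAntinorm v) ((-exFunctional v : ℝ) : EReal) := by
  -- `y² - x² = (y - x)² + 2x(y - x)`, so the sign of `x` decides which term is smaller.
  by_cases hv : |v.1| ≤ v.2
  · have habs := abs_le.1 hv
    rcases le_or_gt 0 v.1 with h0 | hneg
    · rw [exAntinorm_of_fst_nonneg h0 habs.2, lorentzAntinorm_of_mem hv, min_eq_right]
      refine EReal.coe_le_coe_iff.2 (Real.le_sqrt_of_sq_le ?_)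
      rw [exFunctional_apply, Real.norm_eq_abs, sq_abs]
      nlinarith
    · rw [exAntinorm_of_fst_neg hneg, lorentzAntinorm_of_mem hv, min_eq_left]
      rw [exFunctional_apply, Real.norm_eq_abs, sq_abs]
      exact EReal.coe_le_coe_iff.2 (Real.sqrt_le_iff.2 ⟨by linarith, by nlinarith⟩)
  · rw [lorentzAntinorm_of_notMem hv, exAntinorm_of_notMem hv, min_eq_left bot_le]

lemma isAntinorm_exAntinorm : IsAntinorm (normCone ℝ : Set (ℝ × ℝ)) exAntinorm := by
  rw [funext exAntinorm_eq_min]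
  refine isAntinorm_lorentzAntinorm.min_linear (-exFunctional.toLinearMap)
    (fun v hv ↦ ?_) (fun v hv ↦ ?_)
  · rw [intrinsicInterior_normCone] at hv
    exact neg_pos.2 (sub_neg.2 ((le_abs_self _).trans_lt hv))
  · exact neg_nonneg.2 (sub_nonpos.2 ((le_abs_self _).trans hv.1))

lemma continuousOn_exAntinorm : ContinuousOn exAntinorm (normCone ℝ : Set (ℝ × ℝ)) := by
  rw [funext exAntinorm_eq_min]
  have hlinear : Continuous fun v ↦ ((-exFunctional v : ℝ) : EReal) :=
    continuous_coe_real_ereal.comp (by fun_prop)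
  exact continuousOn_lorentzAntinorm.inf hlinear.continuousOn

lemma exFunctional_mem_relBoundary_negDual :
    exFunctional ∈ relBoundary (negDual (normCone ℝ : Set (ℝ × ℝ))) := by
  refine mem_relBoundary_negDual (u := (1, 1)) (interior_negDual_normCone_nonempty ℝ)
    (fun u hu ↦ sub_nonpos.2 ((le_abs_self _).trans hu)) ?_ (by simp) (sub_self 1)
  exact le_of_eq (norm_one (α := ℝ))

lemma exAntinorm_eq_neg_exFunctional_iff {v : ℝ × ℝ} :
    exAntinorm v = ((-exFunctional v : ℝ) : EReal) ↔ 0 ≤ v.1 ∧ v.1 ≤ v.2 := by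
  refine ⟨fun hv ↦ ?_, fun h ↦ exAntinorm_of_fst_nonneg h.1 h.2⟩
  have hmem : |v.1| ≤ v.2 := by
    by_contra hmem
    exact EReal.bot_ne_coe _ ((exAntinorm_of_notMem hmem).symm.trans hv)
  refine ⟨le_of_not_gt fun h0 ↦ ?_, (le_abs_self _).trans hmem⟩
  have hsqrt : √(v.2 ^ 2 - v.1 ^ 2) = v.2 - v.1 := by
    rw [exAntinorm_of_fst_neg h0, lorentzAntinorm_of_mem hmem, EReal.coe_eq_coe_iff,
      exFunctional_apply, neg_sub, Real.norm_eq_abs, sq_abs] at hv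
    exact hv
  have hpos : 0 < v.2 - v.1 := by linarith [abs_nonneg v.1]
  have hsq := (Real.sqrt_eq_iff_mul_self_eq_of_pos hpos).1 hsqrt
  have hprod : v.1 * (v.2 - v.1) = 0 := by linarith
  exact (mul_neg_of_neg_of_pos h0 hpos).ne hprod

lemma pDual_exAntinorm_exFunctional :
    pDual exAntinorm exFunctional = {v : ℝ × ℝ | 0 ≤ v.1 ∧ v.1 ≤ v.2} := by
  rw [pDual_eq_setOf_eq_neg fun v ↦ (exAntinorm_eq_min v).trans_le (min_le_right _ _)]
  · ext v
    exact ⟨fun hv ↦ exAntinorm_eq_neg_exFunctional_iff.1 hv.2,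
      fun hv ↦ ⟨sub_nonpos.2 hv.2, exAntinorm_eq_neg_exFunctional_iff.2 hv⟩⟩
  · intro r hr
    have happly : exFunctional (0, r) = -r := zero_sub r
    refine ⟨(0, r), ?_, happly⟩
    rw [antisphere, mem_ofPred_eq, exAntinorm_of_fst_nonneg le_rfl hr, happly, neg_neg]

lemma intrinsicInterior_pDual_exFunctional_subset :
    intrinsicInterior ℝ (pDual exAntinorm exFunctional) ⊆
      intrinsicInterior ℝ (normCone ℝ : Set (ℝ × ℝ)) := by
  rw [pDual_exAntinorm_exFunctional]
  refine intrinsicInterior_subset_of_subset ⟨(1, 2), ?_⟩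
    fun v hv ↦ (abs_of_nonneg hv.1).trans_le hv.2
  have hopen : IsOpen {v : ℝ × ℝ | 0 < v.1 ∧ v.1 < v.2} :=
    (isOpen_lt (by fun_prop) (by fun_prop)).and (isOpen_lt (by fun_prop) (by fun_prop))
  have hsub : {v : ℝ × ℝ | 0 < v.1 ∧ v.1 < v.2} ⊆ {v | 0 ≤ v.1 ∧ v.1 ≤ v.2} :=
    fun v hv ↦ ⟨hv.1.le, hv.2.le⟩
  exact interior_maximal hsub hopen (by norm_num)

/-- the function of Example 1 is a continuous antinorm associated with
`C = {(x,y) : y ≥ |x|}`; the functional `p(x,y) = x - y` lies in the relative boundary of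
`C^∨`, is not identically zero on `C`, its cone of maximizers is
`p^∨ = {(x,y) : 0 ≤ x ≤ y}` and `ri(p^∨) ⊆ ri C`. In particular this antinorm is linear
on a subcone adjacent to the boundary of `C`. -/
theorem statement17 :
    IsAntinorm {v : ℝ × ℝ | |v.1| ≤ v.2} exAntinorm ∧
    ContinuousOn exAntinorm {v : ℝ × ℝ | |v.1| ≤ v.2} ∧
    exFunctional ∈ relBoundary (negDual {v : ℝ × ℝ | |v.1| ≤ v.2}) ∧
    (∃ u ∈ {v : ℝ × ℝ | |v.1| ≤ v.2}, exFunctional u ≠ 0) ∧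
    pDual exAntinorm exFunctional = {v : ℝ × ℝ | 0 ≤ v.1 ∧ v.1 ≤ v.2} ∧
    intrinsicInterior ℝ (pDual exAntinorm exFunctional)
      ⊆ intrinsicInterior ℝ {v : ℝ × ℝ | |v.1| ≤ v.2} ∧
    ∃ q ∈ relBoundary (negDual {v : ℝ × ℝ | |v.1| ≤ v.2}),
      (∃ u ∈ {v : ℝ × ℝ | |v.1| ≤ v.2}, q u ≠ 0) ∧
      intrinsicInterior ℝ (pDual exAntinorm q)
        ⊆ intrinsicInterior ℝ {v : ℝ × ℝ | |v.1| ≤ v.2} := by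
  have hne : ∃ u ∈ {v : ℝ × ℝ | |v.1| ≤ v.2}, exFunctional u ≠ 0 :=
    ⟨(0, 1), by simp, by simp [exFunctional_apply]⟩
  rw [← coe_normCone_real] at hne ⊢
  exact ⟨isAntinorm_exAntinorm, continuousOn_exAntinorm, exFunctional_mem_relBoundary_negDual, hne,
    pDual_exAntinorm_exFunctional, intrinsicInterior_pDual_exFunctional_subset, exFunctional,
    exFunctional_mem_relBoundary_negDual, hne, intrinsicInterior_pDual_exFunctional_subset⟩
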